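/- Let R be an irreducible ADE root system of rank n, with notation α_i, ϖ_i, h_i (0 ≤ i ≤ n), I = {0,…,n} and R_J (for J ⊂ I) as in the classical affine setup, and let W(R) be its Weyl group. For an integer d ≥ 1, the d-kernels of R are exactly the sub root systems of the form w(R_J), where w ∈ W(R) and J ⊂ I is a subset for which there exist integers x_j > 0 (j ∈ J) with Σ_{j∈J} x_j h_j = d and gcd(d, {x_j : j ∈ J}) = 1. -/

import Mathlib

open scoped RealInnerProductSpace BigOperators

noncomputable section

variable {V : Type} [NormedAddCommGroup V] [InnerProductSpace ℝ V] [FiniteDimensional ℝ V]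

/-- An `ADE` root system: a finite set of vectors of norm 2 with pairwise integral inner
products, stable under the associated reflections. -/
def IsADE (R : Set V) : Prop :=
  R.Finite ∧ (∀ α ∈ R, ⟪α, α⟫ = 2) ∧ (∀ α ∈ R, ∀ β ∈ R, ∃ k : ℤ, ⟪α, β⟫ = (k : ℝ)) ∧
    ∀ α ∈ R, ∀ β ∈ R, β - ⟪β, α⟫ • α ∈ R

/-- A root system is irreducible if it is nonempty and admits no decomposition as an
orthogonal disjoint union of two nonempty subsets. -/
def IsIrreducibleRS (R : Set V) : Prop :=
  R.Nonempty ∧ ∀ S T : Set V, R = S ∪ T → (∀ s ∈ S, ∀ t ∈ T, ⟪s, t⟫ = 0) →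
    S = ∅ ∨ T = ∅

/-- Extension of an `n`-tuple to an `(n+1)`-tuple by prescribing the value at `0`
(affine index set `I = {0, 1, …, n}`). -/
def ext0 {X : Type} {n : ℕ} (x0 : X) (x : Fin n → X) : Fin (n + 1) → X :=
  Fin.cases x0 x

/-- The affine family of roots `α_0 = -α̃, α_1, …, α_n`, where
`α̃ = Σᵢ hᵢ αᵢ` is the highest root. -/
def affRoot {n : ℕ} (α : Fin n → V) (h : Fin n → ℕ) : Fin (n + 1) → V :=
  ext0 (-(∑ i, (h i : ℝ) • α i)) α

/-- The sub root system `R_J = R ∩ Q_J`, where `Q_J = Σ_{i ∈ I∖J} ℤ αᵢ`. -/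
def RJ {n : ℕ} (R : Set V) (α : Fin n → V) (h : Fin n → ℕ) (J : Finset (Fin (n + 1))) :
    Set V :=
  {β ∈ R | β ∈ AddSubgroup.closure (affRoot α h '' {i | i ∉ J})}


/-- The Weyl group `W(R)` : the group of isometries generated by the reflections
`s_α : v ↦ v - (v·α)α`, `α ∈ R`. -/
def WeylGrp (R : Set V) : Subgroup (V ≃ₗᵢ[ℝ] V) :=
  Subgroup.closure {g | ∃ α ∈ R, ∀ v, g v = v - ⟪v, α⟫ • α}

/-- `R'` is a `d`-kernel of the root system `R` : there is a surjective linear map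
`φ : Q(R) → ℤ/dℤ` with `R_2(ker φ) = R'`, where `Q(R)` is the root lattice generated
by `R`. -/
def IsDKernelOfRS (d : ℕ) (R R' : Set V) : Prop :=
  ∃ φ : ↥(AddSubgroup.closure R) →+ ZMod d, Function.Surjective φ ∧
    {v : V | ∃ hv : v ∈ AddSubgroup.closure R, φ ⟨v, hv⟩ = 0 ∧ ⟪v, v⟫ = 2} = R'

/-!
A surjection `φ : Q(R) → ℤ/dℤ` lifts to the pairing with a weight `y`, and surjectivity means that
`y` is primitive modulo `d`; the `d`-kernel is then the set of roots `β` with `d ∣ ⟪y, β⟫`.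
Replacing `y` by `w y + d q`, with `w ∈ W(R)` and `q ∈ Q(R)`, only moves this set by `w`. An element
of the orbit of `y` closest to an interior point of the alcove `0 ≤ ⟪z, α i⟫`, `⟪z, α̃⟫ ≤ d` lies in
the alcove, where it has barycentric coordinates `x_j ∈ ℕ` with `∑ x_j h_j = d`. For a positive root
`β = ∑ c_i α_i` one has `0 ≤ ⟪z, β⟫ = ∑ c_i x_i ≤ ∑ h_i x_i ≤ d`, so `d` divides `⟪z, β⟫` only at
the two extremes; these say that `β`, respectively `α̃ - β`, is a combination of the `α_i` with
`x_i = 0`, and in the second case also `x_0 = 0`. Hence the kernel is `R_J` with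
`J = {j | x_j ≠ 0}`.
-/

section

variable {E : Type} [NormedAddCommGroup E] [InnerProductSpace ℝ E] {R : Set E} {n : ℕ}

/-- The subgroup of the vectors whose inner product with `y` is an integral multiple of `m`.
In particular `R ⊆ dvdPairing 1 y` says that `y` is a weight of `R`. -/
def dvdPairing (m : ℕ) (y : E) : AddSubgroup E :=
  (AddSubgroup.zmultiples (m : ℝ)).comap (innerₗ E y).toAddMonoidHom

lemma mem_dvdPairing {m : ℕ} {y v : E} : v ∈ dvdPairing m y ↔ ∃ k : ℤ, ⟪y, v⟫ = k * m := by
  simp [dvdPairing, AddSubgroup.mem_zmultiples_iff, eq_comm]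

lemma mem_dvdPairing_one {y v : E} : v ∈ dvdPairing 1 y ↔ ∃ k : ℤ, ⟪y, v⟫ = k := by
  simp [mem_dvdPairing]

lemma mem_dvdPairing_iff_of_inner_eq {m : ℕ} {y v : E} {k : ℤ} (hk : ⟪y, v⟫ = k) :
    v ∈ dvdPairing m y ↔ (m : ℤ) ∣ k := by
  rw [mem_dvdPairing, hk, dvd_iff_exists_eq_mul_left]
  exact exists_congr fun l => by norm_cast

lemma mem_dvdPairing_add_iff {m : ℕ} {y u v : E} (hu : v ∈ dvdPairing m u) :
    v ∈ dvdPairing m (y + u) ↔ v ∈ dvdPairing m y := by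
  change ⟪y + u, v⟫ ∈ AddSubgroup.zmultiples (m : ℝ) ↔ _
  rw [inner_add_left]
  exact AddSubgroup.add_mem_cancel_right _ hu

lemma mem_dvdPairing_smul {m d : ℕ} (hmd : m ∣ d) {u v : E} (hu : v ∈ dvdPairing 1 u) :
    v ∈ dvdPairing m ((d : ℝ) • u) := by
  obtain ⟨k, hk⟩ := mem_dvdPairing_one.1 hu
  have hdk : ⟪(d : ℝ) • u, v⟫ = ((d * k : ℤ) : ℝ) := by
    rw [real_inner_smul_left, hk]; push_cast; rfl
  exact (mem_dvdPairing_iff_of_inner_eq hdk).2 ((Int.natCast_dvd_natCast.2 hmd).mul_right k)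

lemma eq_of_two_le_inner {u v : E} (hu : ⟪u, u⟫ = 2) (hv : ⟪v, v⟫ = 2) (huv : 2 ≤ ⟪u, v⟫) :
    u = v := by
  have hle : ⟪u - v, u - v⟫ ≤ 0 := by
    rw [real_inner_sub_sub_self]
    linarith
  exact sub_eq_zero.1 (real_inner_self_nonpos.1 hle)

lemma exists_inner_pos_of_mem_multiset {s : Multiset E} (hs : 0 < ⟪s.sum, s.sum⟫) :
    ∃ β ∈ s, 0 < ⟪s.sum, β⟫ := by
  by_contra! hle
  have hsum : ⟪s.sum, s.sum⟫ = (s.map fun β => ⟪s.sum, β⟫).sum :=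
    map_multiset_sum (innerₗ E s.sum) s
  have := Multiset.sum_le_card_nsmul (s.map fun β => ⟪s.sum, β⟫) 0 (by simpa using hle)
  simp only [smul_zero] at this
  linarith

namespace IsADE

lemma neg_mem (hR : IsADE R) {β : E} (hβ : β ∈ R) : -β ∈ R := by
  have hrefl := hR.2.2.2 β hβ β hβ
  rw [hR.2.1 β hβ] at hrefl
  convert hrefl using 1
  module

lemma closure_eq_addSubmonoidClosure (hR : IsADE R) :
    (AddSubgroup.closure R).toAddSubmonoid = AddSubmonoid.closure R := by
  have hneg : -R ⊆ R := fun β hβ => by simpa using hR.neg_mem (Set.mem_neg.1 hβ)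
  rw [AddSubgroup.closure_toAddSubmonoid, Set.union_eq_self_of_subset_right hneg]

lemma closure_le_dvdPairing_one (hR : IsADE R) {β : E} (hβ : β ∈ R) :
    AddSubgroup.closure R ≤ dvdPairing 1 β :=
  (AddSubgroup.closure_le _).2 fun γ hγ => mem_dvdPairing_one.2 (hR.2.2.1 β hβ γ hγ)

lemma exists_inner_eq_intCast (hR : IsADE R) {u β : E} (hu : u ∈ AddSubgroup.closure R)
    (hβ : β ∈ R) : ∃ k : ℤ, ⟪u, β⟫ = k := by
  rw [real_inner_comm]
  exact mem_dvdPairing_one.1 (hR.closure_le_dvdPairing_one hβ hu)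

lemma mem_of_sub_mem (hR : IsADE R) {v β : E} (hβ : β ∈ R) (hsub : v - β ∈ R)
    (hvβ : ⟪v, β⟫ = 1) : v ∈ R := by
  have hrefl := hR.2.2.2 β hβ _ hsub
  rw [inner_sub_left, hR.2.1 β hβ, hvβ] at hrefl
  convert hrefl using 1
  module

lemma multiset_sum_mem (hR : IsADE R) (s : Multiset E) (hs : ∀ β ∈ s, β ∈ R)
    (hsum : ⟪s.sum, s.sum⟫ = 2) : s.sum ∈ R := by
  classical
  induction s using Multiset.strongInductionOn with
  | ih s ih =>
    obtain ⟨β, hβs, hpos⟩ := exists_inner_pos_of_mem_multiset (hsum ▸ two_pos)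
    have hβ := hs β hβs
    have hsQ : s.sum ∈ AddSubgroup.closure R :=
      AddSubgroup.multiset_sum_mem _ s fun γ hγ => AddSubgroup.subset_closure (hs γ hγ)
    obtain ⟨k, hk⟩ := hR.exists_inner_eq_intCast hsQ hβ
    rcases le_or_gt 2 k with h2 | h2
    · rwa [eq_of_two_le_inner hsum (hR.2.1 β hβ) (by rw [hk]; exact_mod_cast h2)]
    have hk0 : 0 < k := by exact_mod_cast hk ▸ hpos
    have hone : ⟪s.sum, β⟫ = 1 := by rw [hk, show k = 1 by lia, Int.cast_one]
    have herase : (s.erase β).sum = s.sum - β := by rw [← Multiset.sum_erase hβs]; abel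
    refine hR.mem_of_sub_mem hβ (herase ▸ ih _ (Multiset.erase_lt.2 hβs)
      (fun γ hγ => hs γ (Multiset.mem_of_mem_erase hγ)) ?_) hone
    rw [herase, real_inner_sub_sub_self, hsum, hone, hR.2.1 β hβ]
    norm_num

theorem mem_of_mem_closure (hR : IsADE R) {v : E} (hv : v ∈ AddSubgroup.closure R)
    (h2 : ⟪v, v⟫ = 2) : v ∈ R := by
  rw [← AddSubgroup.mem_toAddSubmonoid, hR.closure_eq_addSubmonoidClosure] at hv
  obtain ⟨s, hs, rfl⟩ := AddSubmonoid.exists_multiset_of_mem_closure hv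
  exact hR.multiset_sum_mem s hs h2

lemma exists_reflection_mem_weylGrp (hR : IsADE R) {β : E} (hβ : β ∈ R) :
    ∃ s ∈ WeylGrp R, ∀ v, s v = v - ⟪v, β⟫ • β := by
  have hrefl (v : E) : (Submodule.span ℝ {β})ᗮ.reflection v = v - ⟪v, β⟫ • β := by
    have hnorm : ‖β‖ ^ 2 = 2 := by rw [← real_inner_self_eq_norm_sq, hR.2.1 β hβ]
    rw [Submodule.reflection_orthogonal_apply, Submodule.reflection_singleton_apply,
      RCLike.ofReal_real_eq_id, id, hnorm, real_inner_comm]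
    module
  exact ⟨_, Subgroup.subset_closure ⟨β, hβ, hrefl⟩, hrefl⟩

lemma weylGrp_apply_mem_iff (hR : IsADE R) {w : E ≃ₗᵢ[ℝ] E} (hw : w ∈ WeylGrp R) (β : E) :
    w β ∈ R ↔ β ∈ R := by
  induction hw using Subgroup.closure_induction generalizing β with
  | mem s hs =>
    obtain ⟨γ, hγ, hs⟩ := hs
    have hmaps (δ : E) (hδ : δ ∈ R) : s δ ∈ R := hs δ ▸ hR.2.2.2 γ hγ δ hδ
    have hinvol : s (s β) = β := by
      rw [hs (s β), hs β, inner_sub_left, real_inner_smul_left, hR.2.1 γ hγ]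
      module
    exact ⟨fun hβ => hinvol ▸ hmaps _ hβ, hmaps β⟩
  | one => rfl
  | mul w₁ w₂ _ _ h₁ h₂ => exact (h₁ (w₂ β)).trans (h₂ β)
  | inv w _ hw => rw [← hw, LinearIsometryEquiv.inv_def, LinearIsometryEquiv.apply_symm_apply]

lemma image_weylGrp (hR : IsADE R) {w : E ≃ₗᵢ[ℝ] E} (hw : w ∈ WeylGrp R) : w '' R = R := by
  rw [LinearIsometryEquiv.image_eq_preimage_symm]
  exact Set.ext (hR.weylGrp_apply_mem_iff (inv_mem hw))

lemma weylGrp_apply_mem_closure (hR : IsADE R) {w : E ≃ₗᵢ[ℝ] E} (hw : w ∈ WeylGrp R) {q : E}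
    (hq : q ∈ AddSubgroup.closure R) : w q ∈ AddSubgroup.closure R := by
  have hle : AddSubgroup.closure R ≤ (AddSubgroup.closure R).comap (w : E →+ E) :=
    (AddSubgroup.closure_le _).2 fun β hβ =>
      AddSubgroup.subset_closure ((hR.weylGrp_apply_mem_iff hw β).2 hβ)
  exact hle hq

end IsADE

/-! ### Homomorphisms to `ℤ/dℤ` and primitive weights -/

lemma surjective_intCast_comp_iff {A : Type*} [AddGroup A] (ψ : A →+ ℤ) (d : ℕ) :
    Function.Surjective ((Int.castAddHom (ZMod d)).comp ψ) ↔
      ∀ g : ℕ, g ∣ d → (∀ a, (g : ℤ) ∣ ψ a) → g = 1 := by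
  constructor
  · intro hsurj g hgd hg
    obtain ⟨a, ha⟩ := hsurj 1
    have hda : (d : ℤ) ∣ 1 - ψ a :=
      (ZMod.intCast_eq_intCast_iff_dvd_sub _ _ _).1 (by simpa using ha)
    have hg1 : (g : ℤ) ∣ 1 :=
      (dvd_sub_left (hg a)).1 ((Int.natCast_dvd_natCast.2 hgd).trans hda)
    exact_mod_cast Int.eq_one_of_dvd_one (by positivity) hg1
  · intro hprim t
    obtain ⟨g, hg⟩ := Int.subgroup_cyclic (ψ.range ⊔ AddSubgroup.zmultiples (d : ℤ))
    rw [← AddSubgroup.zmultiples_eq_closure, ← Int.zmultiples_natAbs g] at hg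
    have hdvd {m : ℤ} (hm : m ∈ ψ.range ⊔ AddSubgroup.zmultiples (d : ℤ)) :
        (g.natAbs : ℤ) ∣ m := Int.mem_zmultiples_iff.1 (hg ▸ hm)
    have hg1 : g.natAbs = 1 := hprim _
      (Int.natCast_dvd_natCast.1 (hdvd (AddSubgroup.mem_sup_right (AddSubgroup.mem_zmultiples _))))
      fun a => hdvd (AddSubgroup.mem_sup_left ⟨a, rfl⟩)
    obtain ⟨m, rfl⟩ := ZMod.intCast_surjective t
    have hm : m ∈ ψ.range ⊔ AddSubgroup.zmultiples (d : ℤ) := by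
      rw [hg, hg1, Int.mem_zmultiples_iff]
      exact one_dvd m
    obtain ⟨_, ⟨a, rfl⟩, _, ⟨k, rfl⟩, rfl⟩ := AddSubgroup.mem_sup.1 hm
    exact ⟨a, by simp⟩

lemma addMonoidHom_ext_of_closure_eq {G A : Type*} [AddGroup G] [AddMonoid A] {Q : AddSubgroup G}
    {s : Set G} (hs : AddSubgroup.closure s = Q) {φ ψ : Q →+ A}
    (h : ∀ q : Q, (q : G) ∈ s → φ q = ψ q) : φ = ψ := by
  have hle : AddSubgroup.closure s ≤ (φ.eqLocus ψ).map Q.subtype :=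
    (AddSubgroup.closure_le _).2 fun g hg =>
      ⟨⟨g, hs.le (AddSubgroup.subset_closure hg)⟩, h _ hg, rfl⟩
  ext q
  obtain ⟨q', hq', hqq'⟩ := hle (hs.ge q.2)
  obtain rfl : q' = q := Subtype.ext hqq'
  exact hq'

lemma exists_pairing_addMonoidHom {Q : AddSubgroup E} {y : E} (hy : Q ≤ dvdPairing 1 y) :
    ∃ ψ : Q →+ ℤ, ∀ q : Q, ⟪y, (q : E)⟫ = ψ q := by
  choose ψ hψ using fun q : Q => mem_dvdPairing_one.1 (hy q.2)
  refine ⟨AddMonoidHom.mk' ψ fun a b => ?_, hψ⟩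
  have hadd : ⟪y, ((a + b : Q) : E)⟫ = ⟪y, (a : E)⟫ + ⟪y, (b : E)⟫ := inner_add_right ..
  rw [hψ, hψ, hψ] at hadd
  exact_mod_cast hadd

lemma closure_range_eq_closure {α : Fin n → E} (hα : ∀ i, α i ∈ R)
    (hpos : ∀ β ∈ R, (∃ c : Fin n → ℕ, β = ∑ i, (c i : ℝ) • α i) ∨
      (∃ c : Fin n → ℕ, β = -(∑ i, (c i : ℝ) • α i))) :
    AddSubgroup.closure (Set.range α) = AddSubgroup.closure R := by
  refine le_antisymm (AddSubgroup.closure_mono (Set.range_subset_iff.2 hα))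
    ((AddSubgroup.closure_le _).2 fun β hβ => ?_)
  have hsum (c : Fin n → ℕ) : ∑ i, (c i : ℝ) • α i ∈ AddSubgroup.closure (Set.range α) := by
    simp only [Nat.cast_smul_eq_nsmul]
    exact sum_mem fun i _ => nsmul_mem (AddSubgroup.subset_closure (Set.mem_range_self i)) _
  obtain ⟨c, rfl⟩ | ⟨c, rfl⟩ := hpos β hβ
  · exact hsum c
  · exact neg_mem (hsum c)

/-- A weight `y` of `R` that is primitive modulo `d`: no divisor `g ≠ 1` of `d` divides all the
integers `⟪y, β⟫` for `β ∈ R`. -/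
def IsPrimitiveWeight (R : Set E) (d : ℕ) (y : E) : Prop :=
  R ⊆ dvdPairing 1 y ∧ ∀ g : ℕ, g ∣ d → R ⊆ dvdPairing g y → g = 1

lemma surjective_intCast_pairing_iff {y : E} {ψ : AddSubgroup.closure R →+ ℤ}
    (hψ : ∀ q : AddSubgroup.closure R, ⟪y, (q : E)⟫ = ψ q) (d : ℕ) :
    Function.Surjective ((Int.castAddHom (ZMod d)).comp ψ) ↔
      ∀ g : ℕ, g ∣ d → R ⊆ dvdPairing g y → g = 1 := by
  have hdvd (g : ℕ) : (∀ q, (g : ℤ) ∣ ψ q) ↔ R ⊆ dvdPairing g y := by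
    rw [← AddSubgroup.closure_le]
    exact ⟨fun h q hq => (mem_dvdPairing_iff_of_inner_eq (hψ ⟨q, hq⟩)).2 (h _),
      fun h q => (mem_dvdPairing_iff_of_inner_eq (hψ q)).1 (h q.2)⟩
  simp only [surjective_intCast_comp_iff, hdvd]

lemma exists_eq_intCast_pairing {α ϖ : Fin n → E}
    (hQ : AddSubgroup.closure (Set.range α) = AddSubgroup.closure R)
    (hϖ : ∀ i j, ⟪ϖ i, α j⟫ = if i = j then 1 else 0) {d : ℕ}
    (φ : AddSubgroup.closure R →+ ZMod d) :
    ∃ y, R ⊆ dvdPairing 1 y ∧ ∃ ψ : AddSubgroup.closure R →+ ℤ,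
      (∀ q : AddSubgroup.closure R, ⟪y, (q : E)⟫ = ψ q) ∧ φ = (Int.castAddHom (ZMod d)).comp ψ := by
  have hαQ (i : Fin n) : α i ∈ AddSubgroup.closure R :=
    hQ ▸ AddSubgroup.subset_closure (Set.mem_range_self i)
  choose a ha using fun i => ZMod.intCast_surjective (φ ⟨α i, hαQ i⟩)
  set y := ∑ i, (a i : ℝ) • ϖ i
  have hyα (i : Fin n) : ⟪y, α i⟫ = a i := by simp [y, sum_inner, real_inner_smul_left, hϖ]
  have hy : AddSubgroup.closure R ≤ dvdPairing 1 y := by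
    rw [← hQ, AddSubgroup.closure_le]
    rintro _ ⟨i, rfl⟩
    exact mem_dvdPairing_one.2 ⟨a i, hyα i⟩
  obtain ⟨ψ, hψ⟩ := exists_pairing_addMonoidHom hy
  refine ⟨y, (AddSubgroup.closure_le _).1 hy, ψ, hψ,
    addMonoidHom_ext_of_closure_eq hQ ?_⟩
  rintro ⟨_, hi⟩ ⟨i, rfl⟩
  have hψi : (ψ ⟨α i, hi⟩ : ℝ) = a i := (hψ ⟨α i, hi⟩).symm.trans (hyα i)
  have hψi' : ψ ⟨α i, hi⟩ = a i := by exact_mod_cast hψi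
  simp [hψi', ha]

lemma IsADE.setOf_intCast_pairing_eq_zero (hR : IsADE R) {y : E}
    {ψ : AddSubgroup.closure R →+ ℤ} (hψ : ∀ q : AddSubgroup.closure R, ⟪y, (q : E)⟫ = ψ q)
    (d : ℕ) :
    {v : E | ∃ hv : v ∈ AddSubgroup.closure R,
      (Int.castAddHom (ZMod d)).comp ψ ⟨v, hv⟩ = 0 ∧ ⟪v, v⟫ = 2} = R ∩ dvdPairing d y := by
  have hzero {v : E} (hv : v ∈ AddSubgroup.closure R) :
      (Int.castAddHom (ZMod d)).comp ψ ⟨v, hv⟩ = 0 ↔ v ∈ dvdPairing d y := by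
    rw [mem_dvdPairing_iff_of_inner_eq (hψ ⟨v, hv⟩)]
    exact ZMod.intCast_zmod_eq_zero_iff_dvd _ _
  ext v
  constructor
  · rintro ⟨hv, hφ, h2⟩
    exact ⟨hR.mem_of_mem_closure hv h2, (hzero hv).1 hφ⟩
  · rintro ⟨hv, hvd⟩
    have hvQ := AddSubgroup.subset_closure hv
    exact ⟨hvQ, (hzero hvQ).2 hvd, hR.2.1 v hv⟩

theorem IsADE.isDKernelOfRS_iff_exists_isPrimitiveWeight (hR : IsADE R) {α ϖ : Fin n → E}
    (hQ : AddSubgroup.closure (Set.range α) = AddSubgroup.closure R)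
    (hϖ : ∀ i j, ⟪ϖ i, α j⟫ = if i = j then 1 else 0) {d : ℕ} {R' : Set E} :
    IsDKernelOfRS d R R' ↔ ∃ y, IsPrimitiveWeight R d y ∧ R' = R ∩ dvdPairing d y := by
  constructor
  · rintro ⟨φ, hsurj, rfl⟩
    obtain ⟨y, hy, ψ, hψ, rfl⟩ := exists_eq_intCast_pairing hQ hϖ φ
    exact ⟨y, ⟨hy, (surjective_intCast_pairing_iff hψ d).1 hsurj⟩,
      hR.setOf_intCast_pairing_eq_zero hψ d⟩
  · rintro ⟨y, ⟨hy, hprim⟩, rfl⟩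
    obtain ⟨ψ, hψ⟩ := exists_pairing_addMonoidHom ((AddSubgroup.closure_le _).2 hy)
    exact ⟨_, (surjective_intCast_pairing_iff hψ d).2 hprim,
      hR.setOf_intCast_pairing_eq_zero hψ d⟩

/-! ### Affine Weyl group orbits and the alcove -/

lemma IsADE.image_weylGrp_inter_dvdPairing (hR : IsADE R) {w : E ≃ₗᵢ[ℝ] E} (hw : w ∈ WeylGrp R)
    {q : E} (hq : q ∈ AddSubgroup.closure R) {g d : ℕ} (hgd : g ∣ d) (y : E) :
    w '' (R ∩ dvdPairing g y) = R ∩ dvdPairing g (w y + (d : ℝ) • q) := by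
  ext β
  rw [LinearIsometryEquiv.image_eq_preimage_symm]
  refine (and_congr_left' (hR.weylGrp_apply_mem_iff (inv_mem hw) β)).trans
    (and_congr_right fun hβ => ?_)
  have hqβ := mem_dvdPairing_one.2 (hR.exists_inner_eq_intCast hq hβ)
  change w.symm β ∈ dvdPairing g y ↔ β ∈ dvdPairing g (w y + (d : ℝ) • q)
  rw [mem_dvdPairing_add_iff (mem_dvdPairing_smul hgd hqβ), mem_dvdPairing, mem_dvdPairing,
    LinearIsometryEquiv.inner_map_eq_flip]

lemma IsADE.isPrimitiveWeight_weylGrp_add_smul_iff (hR : IsADE R) {w : E ≃ₗᵢ[ℝ] E}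
    (hw : w ∈ WeylGrp R) {q : E} (hq : q ∈ AddSubgroup.closure R) {d : ℕ} {y : E} :
    IsPrimitiveWeight R d (w y + (d : ℝ) • q) ↔ IsPrimitiveWeight R d y := by
  have hsub {g : ℕ} (hgd : g ∣ d) :
      R ⊆ dvdPairing g (w y + (d : ℝ) • q) ↔ R ⊆ dvdPairing g y := by
    rw [← Set.inter_eq_left, ← Set.inter_eq_left, ← hR.image_weylGrp_inter_dvdPairing hw hq hgd]
    nth_rw 2 [← hR.image_weylGrp hw]
    exact w.injective.image_injective.eq_iff
  exact and_congr (hsub (one_dvd d)) (forall₂_congr fun g hgd => by rw [hsub hgd])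

/-- `z` lies in the orbit of `y` under the affine Weyl group `W(R) ⋉ d Q(R)`. -/
def IsAffineWeylConj (R : Set E) (d : ℕ) (y z : E) : Prop :=
  ∃ w ∈ WeylGrp R, ∃ q ∈ AddSubgroup.closure R, z = w y + (d : ℝ) • q

namespace IsAffineWeylConj

variable {d : ℕ} {y z : E}

lemma refl (R : Set E) (d : ℕ) (y : E) : IsAffineWeylConj R d y y :=
  ⟨1, one_mem _, 0, zero_mem _, by simp⟩

lemma affineReflection (hR : IsADE R) (hz : IsAffineWeylConj R d y z) {β : E} (hβ : β ∈ R)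
    (k : ℤ) : IsAffineWeylConj R d y (z - (⟪z, β⟫ + d * k) • β) := by
  obtain ⟨w, hw, q, hq, rfl⟩ := hz
  obtain ⟨s, hs, hsv⟩ := hR.exists_reflection_mem_weylGrp hβ
  refine ⟨s * w, mul_mem hs hw, s q - k • β, sub_mem (hR.weylGrp_apply_mem_closure hs hq)
    (zsmul_mem (AddSubgroup.subset_closure hβ) k), ?_⟩
  rw [LinearIsometryEquiv.coe_mul, Function.comp_apply, hsv, hsv, ← Int.cast_smul_eq_zsmul ℝ,
    inner_add_left, real_inner_smul_left]
  module

lemma subset_dvdPairing_one (hR : IsADE R) (hz : IsAffineWeylConj R d y z)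
    (hy : R ⊆ dvdPairing 1 y) : R ⊆ dvdPairing 1 z := by
  obtain ⟨w, hw, q, hq, rfl⟩ := hz
  rw [← Set.inter_eq_left, ← hR.image_weylGrp_inter_dvdPairing hw hq (one_dvd d),
    Set.inter_eq_left.2 hy, hR.image_weylGrp hw]

end IsAffineWeylConj

/-- The `j`-th barycentric coordinate of `z` with respect to the alcove of level `d`, which is
cut out by `0 ≤ ⟪z, α i⟫` and `⟪z, α̃⟫ ≤ d`. -/
def alcoveCoord (d : ℕ) (α : Fin n → E) (h : Fin n → ℕ) (z : E) (j : Fin (n + 1)) : ℝ :=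
  ⟪z, affRoot α h j⟫ + ext0 (d : ℝ) 0 j

section alcoveCoord

variable {α ϖ : Fin n → E} {h : Fin n → ℕ} {d : ℕ} {z : E}

lemma affRoot_zero (α : Fin n → E) (h : Fin n → ℕ) :
    affRoot α h 0 = -∑ i, (h i : ℝ) • α i := rfl

lemma affRoot_succ (α : Fin n → E) (h : Fin n → ℕ) (i : Fin n) : affRoot α h i.succ = α i := rfl

lemma alcoveCoord_zero (d : ℕ) (α : Fin n → E) (h : Fin n → ℕ) (z : E) :
    alcoveCoord d α h z 0 = d - ∑ i, h i * ⟪z, α i⟫ := by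
  simp only [alcoveCoord, affRoot_zero, ext0, Fin.cases_zero, inner_neg_right, inner_sum,
    real_inner_smul_right]
  ring

lemma alcoveCoord_succ (d : ℕ) (α : Fin n → E) (h : Fin n → ℕ) (z : E) (i : Fin n) :
    alcoveCoord d α h z i.succ = ⟪z, α i⟫ := by
  simp [alcoveCoord, affRoot_succ, ext0]

lemma sum_alcoveCoord_mul (d : ℕ) (α : Fin n → E) (h : Fin n → ℕ) (z : E) :
    ∑ j, alcoveCoord d α h z j * ext0 1 h j = d := by
  simp [Fin.sum_univ_succ, alcoveCoord_zero, alcoveCoord_succ, ext0, mul_comm]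

lemma sum_mul_ext0_eq {X : Fin (n + 1) → ℕ} (hX : ∀ j, alcoveCoord d α h z j = X j) :
    ∑ j, X j * ext0 1 h j = d := by
  have hsum := sum_alcoveCoord_mul d α h z
  simp only [hX] at hsum
  exact_mod_cast hsum

lemma exists_alcoveCoord_eq (α : Fin n → E) (hϖ : ∀ i j, ⟪ϖ i, α j⟫ = if i = j then 1 else 0)
    {X : Fin (n + 1) → ℕ} (hX : ∑ j, X j * ext0 1 h j = d) :
    ∃ z, ∀ j, alcoveCoord d α h z j = X j := by
  have hzα (i : Fin n) : ⟪∑ k : Fin n, (X k.succ : ℝ) • ϖ k, α i⟫ = X i.succ := by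
    simp [sum_inner, real_inner_smul_left, hϖ]
  refine ⟨∑ i : Fin n, (X i.succ : ℝ) • ϖ i, Fin.cases ?_ fun i => ?_⟩
  · rw [alcoveCoord_zero, ← hX, Fin.sum_univ_succ]
    simp only [hzα, ext0, Fin.cases_zero, Fin.cases_succ]
    push_cast
    simp [mul_comm]
  · rw [alcoveCoord_succ, hzα]

lemma IsADE.affRoot_mem (hR : IsADE R) (hα : ∀ i, α i ∈ R)
    (hhighest : ∑ i, (h i : ℝ) • α i ∈ R) : ∀ j, affRoot α h j ∈ R :=
  Fin.cases (hR.neg_mem hhighest) hα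

lemma norm_smul_sub_affineReflection_sq {a : E} (ha : ⟪a, a⟫ = 2) (c δ : ℝ) (ρ z : E) :
    ‖c • (z - (⟪z, a⟫ + δ) • a) - ρ‖ ^ 2 =
      ‖c • z - ρ‖ ^ 2 + 2 * c * (⟪z, a⟫ + δ) * (⟪ρ, a⟫ + c * δ) := by
  have hsplit : c • (z - (⟪z, a⟫ + δ) • a) - ρ = (c • z - ρ) - (c * (⟪z, a⟫ + δ)) • a := by module
  rw [hsplit, norm_sub_sq_real, norm_smul, mul_pow, ← real_inner_self_eq_norm_sq a, ha,
    real_inner_smul_right, inner_sub_left, real_inner_smul_left, Real.norm_eq_abs, sq_abs]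
  ring

lemma one_le_alcoveCoord_sum_weight (hϖ : ∀ i j, ⟪ϖ i, α j⟫ = if i = j then 1 else 0)
    (hd : 1 ≤ d) (j : Fin (n + 1)) :
    1 ≤ alcoveCoord ((∑ i, h i + 1) * d) α h (∑ i, ϖ i) j := by
  have hρ (i : Fin n) : ⟪∑ k, ϖ k, α i⟫ = 1 := by simp [sum_inner, hϖ]
  induction j using Fin.cases with
  | zero =>
    have hle : ∑ i, h i + 1 ≤ (∑ i, h i + 1) * d := Nat.le_mul_of_pos_right _ hd
    have hle' : (∑ i, (h i : ℝ)) + 1 ≤ ((∑ i, h i + 1) * d : ℕ) := by exact_mod_cast hle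
    rw [alcoveCoord_zero]
    simp only [hρ, mul_one]
    linarith
  | succ i => rw [alcoveCoord_succ, hρ]

/-- The image of `z` under the affine reflection in the `j`-th wall of the alcove of level `d`. -/
def wallReflection (d : ℕ) (α : Fin n → E) (h : Fin n → ℕ) (j : Fin (n + 1)) (z : E) : E :=
  z - alcoveCoord d α h z j • affRoot α h j

lemma IsAffineWeylConj.wallReflection (hR : IsADE R) {y : E} (hz : IsAffineWeylConj R d y z)
    {j : Fin (n + 1)} (hj : affRoot α h j ∈ R) :
    IsAffineWeylConj R d y (wallReflection d α h j z) := by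
  have hδ : ext0 (d : ℝ) 0 j = d * (ext0 1 0 j : ℤ) := by
    cases j using Fin.cases <;> simp [ext0]
  rw [_root_.wallReflection, alcoveCoord, hδ]
  exact hz.affineReflection hR hj _

/- `(∑ i, ϖ i) / (∑ i, h i + 1)` is an interior point of the alcove of level `d`, so it lies on the
positive side of every wall; distances to it are scaled by `∑ i, h i + 1`. -/
lemma norm_wallReflection_sq_le (hϖ : ∀ i j, ⟪ϖ i, α j⟫ = if i = j then 1 else 0) (hd : 1 ≤ d)
    {j : Fin (n + 1)} (hj : ⟪affRoot α h j, affRoot α h j⟫ = 2)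
    (hz : alcoveCoord d α h z j ≤ -1) :
    ‖((∑ i, h i + 1 : ℕ) : ℝ) • wallReflection d α h j z - ∑ i, ϖ i‖ ^ 2 + 1 ≤
      ‖((∑ i, h i + 1 : ℕ) : ℝ) • z - ∑ i, ϖ i‖ ^ 2 := by
  set c : ℕ := ∑ i, h i + 1
  have hc : (1 : ℝ) ≤ c := by exact_mod_cast Nat.le_add_left 1 _
  have hδ : ext0 ((c * d : ℕ) : ℝ) 0 j = c * ext0 (d : ℝ) 0 j := by
    cases j using Fin.cases <;> simp [ext0]
  have hρ := one_le_alcoveCoord_sum_weight (h := h) hϖ hd j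
  rw [alcoveCoord, hδ] at hρ
  rw [wallReflection, alcoveCoord, norm_smul_sub_affineReflection_sq hj]
  rw [alcoveCoord] at hz
  nlinarith [mul_le_mul hc hρ zero_le_one (by positivity)]

theorem exists_isAffineWeylConj_alcoveCoord_eq (hR : IsADE R) (hα : ∀ i, α i ∈ R)
    (hϖ : ∀ i j, ⟪ϖ i, α j⟫ = if i = j then 1 else 0)
    (hhighest : ∑ i, (h i : ℝ) • α i ∈ R) (hd : 1 ≤ d) {y : E} (hy : R ⊆ dvdPairing 1 y) :
    ∃ z, IsAffineWeylConj R d y z ∧ ∃ X : Fin (n + 1) → ℕ, ∀ j, alcoveCoord d α h z j = X j := by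
  obtain ⟨z, hz, hmin⟩ := exists_minimalFor_of_wellFoundedLT (IsAffineWeylConj R d y)
    (fun z => ⌊‖((∑ i, h i + 1 : ℕ) : ℝ) • z - ∑ i, ϖ i‖ ^ 2⌋₊) ⟨y, .refl R d y⟩
  have haff := hR.affRoot_mem hα hhighest
  have hint (j : Fin (n + 1)) : ∃ k : ℤ, alcoveCoord d α h z j = k := by
    obtain ⟨k, hk⟩ := mem_dvdPairing_one.1 (hz.subset_dvdPairing_one hR hy (haff j))
    refine ⟨k + ext0 (d : ℤ) 0 j, ?_⟩
    rw [alcoveCoord, hk]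
    cases j using Fin.cases <;> simp [ext0]
  choose k hk using hint
  have hk0 (j : Fin (n + 1)) : 0 ≤ k j := by
    by_contra! hneg
    have hle := norm_wallReflection_sq_le (z := z) hϖ hd (hR.2.1 _ (haff j))
      (by rw [hk]; exact_mod_cast Int.le_sub_one_of_lt hneg)
    have hlt := Nat.floor_mono hle
    rw [Nat.floor_add_one (by positivity)] at hlt
    exact absurd (hmin (hz.wallReflection hR (haff j)) (by lia)) (by simpa using hlt)
  choose X hX using fun j => Int.eq_ofNat_of_zero_le (hk0 j)
  exact ⟨z, hz, X, fun j => by rw [hk, hX, Int.cast_natCast]⟩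

end alcoveCoord

/-! ### The kernel of an alcove point -/

section kernelOfAlcovePoint

variable {α ϖ : Fin n → E} {h : Fin n → ℕ} {d : ℕ} {z : E} {X : Fin (n + 1) → ℕ}
  {J : Finset (Fin (n + 1))}

lemma inner_sum_smul_eq_sum_mul (hX : ∀ j, alcoveCoord d α h z j = X j) (c : Fin n → ℕ) :
    ⟪z, ∑ i, (c i : ℝ) • α i⟫ = ((∑ i, X i.succ * c i : ℕ) : ℤ) := by
  have hzα (i : Fin n) : ⟪z, α i⟫ = X i.succ := by rw [← hX, alcoveCoord_succ]
  simp [inner_sum, real_inner_smul_right, hzα, mul_comm]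

lemma sum_nsmul_affRoot_mem_closure (hJ : ∀ j ∈ J, X j ≠ 0) {e : Fin (n + 1) → ℕ}
    (he : ∑ j, X j * e j = 0) :
    ∑ j, e j • affRoot α h j ∈ AddSubgroup.closure (affRoot α h '' {i | i ∉ J}) := by
  refine sum_mem fun j _ => ?_
  by_cases hj : j ∈ J
  · have hej : X j * e j = 0 := Finset.sum_eq_zero_iff.1 he j (Finset.mem_univ j)
    rw [(mul_eq_zero.1 hej).resolve_left (hJ j hj), zero_nsmul]
    exact zero_mem _
  · exact nsmul_mem (AddSubgroup.subset_closure (Set.mem_image_of_mem _ hj)) _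

lemma sum_smul_mem_closure_affRoot (hX : ∀ j, alcoveCoord d α h z j = X j)
    (hJ : ∀ j ∈ J, X j ≠ 0) {c : Fin n → ℕ} (hc : c ≤ h)
    (hdvd : ∑ i, (c i : ℝ) • α i ∈ dvdPairing d z) :
    ∑ i, (c i : ℝ) • α i ∈ AddSubgroup.closure (affRoot α h '' {i | i ∉ J}) := by
  rw [mem_dvdPairing_iff_of_inner_eq (inner_sum_smul_eq_sum_mul hX c),
    Int.natCast_dvd_natCast] at hdvd
  have hsum := sum_mul_ext0_eq hX
  simp only [Fin.sum_univ_succ, ext0, Fin.cases_zero, Fin.cases_succ, mul_one] at hsum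
  have hsplit : ∑ i : Fin n, X i.succ * c i + ∑ i : Fin n, X i.succ * (h i - c i) =
      ∑ i : Fin n, X i.succ * h i := by
    rw [← Finset.sum_add_distrib]
    exact Finset.sum_congr rfl fun i _ => by rw [← mul_add, Nat.add_sub_cancel' (hc i)]
  obtain hzero | hpos := Nat.eq_zero_or_pos (∑ i : Fin n, X i.succ * c i)
  · simpa [Fin.sum_univ_succ, ext0, affRoot_succ, Nat.cast_smul_eq_nsmul] using
      sum_nsmul_affRoot_mem_closure (α := α) (h := h) hJ (e := ext0 0 c)
        (by simpa [Fin.sum_univ_succ, ext0] using hzero)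
  · have hle := Nat.le_of_dvd hpos hdvd
    have hneg : ∑ j, (ext0 1 (h - c) : Fin (n + 1) → ℕ) j • affRoot α h j =
        -∑ i, (c i : ℝ) • α i := by
      simp only [Fin.sum_univ_succ, ext0, Fin.cases_zero, Fin.cases_succ, affRoot_zero,
        affRoot_succ, Pi.sub_apply, ← Nat.cast_smul_eq_nsmul ℝ, Nat.cast_sub (hc _),
        Nat.cast_one, one_smul, sub_smul, Finset.sum_sub_distrib]
      abel
    rw [← neg_mem_iff, ← hneg]
    refine sum_nsmul_affRoot_mem_closure hJ ?_
    simp only [Fin.sum_univ_succ, ext0, Fin.cases_zero, Fin.cases_succ, Pi.sub_apply]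
    lia

lemma closure_affRoot_image_le_dvdPairing (hX : ∀ j, alcoveCoord d α h z j = X j)
    (hJ : ∀ j, j ∉ J → X j = 0) :
    AddSubgroup.closure (affRoot α h '' {i | i ∉ J}) ≤ dvdPairing d z := by
  rw [AddSubgroup.closure_le, Set.image_subset_iff]
  refine fun j hj => mem_dvdPairing.2 ⟨-ext0 1 0 j, ?_⟩
  have hzero : alcoveCoord d α h z j = 0 := by rw [hX, hJ j hj, Nat.cast_zero]
  rw [alcoveCoord, add_eq_zero_iff_eq_neg] at hzero
  rw [hzero]
  cases j using Fin.cases <;> simp [ext0]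

theorem IsADE.RJ_eq_inter_dvdPairing (hR : IsADE R)
    (hpos : ∀ β ∈ R, (∃ c : Fin n → ℕ, β = ∑ i, (c i : ℝ) • α i) ∨
      (∃ c : Fin n → ℕ, β = -(∑ i, (c i : ℝ) • α i)))
    (hϖ : ∀ i j, ⟪ϖ i, α j⟫ = if i = j then 1 else 0)
    (hh : ∀ i, ∀ β ∈ R, ⟪ϖ i, β⟫ ≤ h i)
    (hX : ∀ j, alcoveCoord d α h z j = X j) (hJ : ∀ j, j ∈ J ↔ X j ≠ 0) :
    RJ R α h J = R ∩ dvdPairing d z := by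
  have hle {c : Fin n → ℕ} (hc : ∑ i, (c i : ℝ) • α i ∈ R) : c ≤ h := fun i => by
    simpa [inner_sum, real_inner_smul_right, hϖ] using hh i _ hc
  have hJX : ∀ j ∈ J, X j ≠ 0 := fun j => (hJ j).1
  ext β
  refine and_congr_right fun hβ =>
    ⟨fun hmem => closure_affRoot_image_le_dvdPairing hX (by simp [hJ]) hmem, fun hmem => ?_⟩
  obtain ⟨c, rfl⟩ | ⟨c, rfl⟩ := hpos β hβ
  · exact sum_smul_mem_closure_affRoot hX hJX (hle hβ) hmem
  · exact neg_mem_iff.2 (sum_smul_mem_closure_affRoot hX hJX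
      (hle (by simpa using hR.neg_mem hβ)) (neg_mem_iff.1 hmem))

lemma subset_dvdPairing_iff_forall_dvd
    (hQ : AddSubgroup.closure (Set.range α) = AddSubgroup.closure R)
    (hX : ∀ j, alcoveCoord d α h z j = X j) (g : ℕ) :
    R ⊆ dvdPairing g z ↔ ∀ i : Fin n, g ∣ X i.succ := by
  have hzα (i : Fin n) : ⟪z, α i⟫ = (X i.succ : ℤ) := by
    rw [← alcoveCoord_succ d α h, hX, Int.cast_natCast]
  rw [← AddSubgroup.closure_le, ← hQ, AddSubgroup.closure_le, Set.range_subset_iff]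
  exact forall_congr' fun i =>
    (mem_dvdPairing_iff_of_inner_eq (hzα i)).trans Int.natCast_dvd_natCast

lemma isPrimitiveWeight_iff_forall_dvd
    (hQ : AddSubgroup.closure (Set.range α) = AddSubgroup.closure R)
    (hX : ∀ j, alcoveCoord d α h z j = X j) :
    IsPrimitiveWeight R d z ↔ ∀ g : ℕ, g ∣ d → (∀ j, g ∣ X j) → g = 1 := by
  have hsum := sum_mul_ext0_eq hX
  simp only [Fin.sum_univ_succ, ext0, Fin.cases_zero, Fin.cases_succ, mul_one] at hsum
  simp only [IsPrimitiveWeight, subset_dvdPairing_iff_forall_dvd hQ hX, Fin.forall_fin_succ,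
    one_dvd, implies_true, true_and]
  refine forall₂_congr fun g hgd => imp_congr_left ⟨fun hg => ⟨?_, hg⟩, And.right⟩
  rw [← hsum] at hgd
  exact (Nat.dvd_add_left (Finset.dvd_sum fun i _ => (hg i).mul_right _)).1 hgd

end kernelOfAlcovePoint

lemma gcd_finset_gcd_eq_one_iff {ι : Type*} (J : Finset ι) (x : ι → ℕ) (d : ℕ) :
    Nat.gcd d (J.gcd x) = 1 ↔ ∀ g : ℕ, g ∣ d → (∀ j ∈ J, g ∣ x j) → g = 1 := by
  refine ⟨fun hgcd g hgd hg =>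
      Nat.dvd_one.1 (hgcd ▸ Nat.dvd_gcd hgd (Finset.dvd_gcd hg)), fun hprim => ?_⟩
  exact hprim _ (Nat.gcd_dvd_left _ _) fun j hj =>
    (Nat.gcd_dvd_right _ _).trans (Finset.gcd_dvd hj)

lemma exists_pos_sum_mul_gcd_eq_one_iff {ι : Type*} [Fintype ι] (J : Finset ι) (a : ι → ℕ)
    (d : ℕ) :
    (∃ x : ι → ℕ, (∀ j ∈ J, 0 < x j) ∧ ∑ j ∈ J, x j * a j = d ∧ Nat.gcd d (J.gcd x) = 1) ↔
      ∃ X : ι → ℕ, (∀ j, j ∈ J ↔ X j ≠ 0) ∧ ∑ j, X j * a j = d ∧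
        ∀ g : ℕ, g ∣ d → (∀ j, g ∣ X j) → g = 1 := by
  classical
  simp only [gcd_finset_gcd_eq_one_iff]
  constructor
  · rintro ⟨x, hx, hsum, hprim⟩
    refine ⟨fun j => if j ∈ J then x j else 0, fun j => ?_, ?_, fun g hgd hg => ?_⟩
    · by_cases hj : j ∈ J <;> simp [hj, (hx j _).ne']
    · simpa [ite_mul, Finset.sum_ite_mem] using hsum
    · exact hprim g hgd fun j hj => by simpa [hj] using hg j
  · rintro ⟨X, hJ, hsum, hprim⟩
    have hout {j : ι} (hj : j ∉ J) : X j = 0 := by simpa [hJ] using hj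
    refine ⟨X, fun j hj => Nat.pos_of_ne_zero ((hJ j).1 hj), ?_, fun g hgd hg => ?_⟩
    · rw [← hsum]
      exact Finset.sum_subset J.subset_univ fun j _ hj => by rw [hout hj, zero_mul]
    · refine hprim g hgd fun j => ?_
      by_cases hj : j ∈ J
      · exact hg j hj
      · exact hout hj ▸ dvd_zero g

theorem classification_d_kernels_general (hR : IsADE R) {α : Fin n → E} (hα : ∀ i, α i ∈ R)
    (hpos : ∀ β ∈ R, (∃ c : Fin n → ℕ, β = ∑ i, (c i : ℝ) • α i) ∨
      (∃ c : Fin n → ℕ, β = -(∑ i, (c i : ℝ) • α i)))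
    {ϖ : Fin n → E} (hϖ : ∀ i j, ⟪ϖ i, α j⟫ = if i = j then 1 else 0)
    {h : Fin n → ℕ} (hh : ∀ i, IsGreatest ((fun β => ⟪ϖ i, β⟫) '' R) (h i : ℝ))
    (hhighest : ∑ i, (h i : ℝ) • α i ∈ R) {d : ℕ} (hd : 1 ≤ d) (R' : Set E) :
    IsDKernelOfRS d R R' ↔
      ∃ w ∈ WeylGrp R, ∃ J : Finset (Fin (n + 1)),
        (∃ x : Fin (n + 1) → ℕ, (∀ j ∈ J, 0 < x j) ∧
          ∑ j ∈ J, x j * ext0 1 h j = d ∧ Nat.gcd d (J.gcd x) = 1) ∧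
        R' = (fun v => w v) '' RJ R α h J := by
  have hQ := closure_range_eq_closure hα hpos
  have hle : ∀ i, ∀ β ∈ R, ⟪ϖ i, β⟫ ≤ h i := fun i β hβ => (hh i).2 ⟨β, hβ, rfl⟩
  simp only [hR.isDKernelOfRS_iff_exists_isPrimitiveWeight hQ hϖ,
    exists_pos_sum_mul_gcd_eq_one_iff]
  constructor
  · rintro ⟨y, hy, rfl⟩
    obtain ⟨_, ⟨w, hw, q, hq, rfl⟩, X, hX⟩ :=
      exists_isAffineWeylConj_alcoveCoord_eq hR hα hϖ hhighest hd hy.1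
    have hJ : ∀ j, j ∈ Finset.univ.filter (X · ≠ 0) ↔ X j ≠ 0 := by simp
    have hprim := (hR.isPrimitiveWeight_weylGrp_add_smul_iff hw hq).2 hy
    refine ⟨w⁻¹, inv_mem hw, _, ⟨X, hJ, sum_mul_ext0_eq hX,
      (isPrimitiveWeight_iff_forall_dvd hQ hX).1 hprim⟩, ?_⟩
    rw [hR.RJ_eq_inter_dvdPairing hpos hϖ hle hX hJ,
      ← hR.image_weylGrp_inter_dvdPairing hw hq dvd_rfl, Set.image_image]
    simp
  · rintro ⟨w, hw, J, ⟨X, hJ, hsum, hprim⟩, rfl⟩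
    obtain ⟨z, hX⟩ := exists_alcoveCoord_eq α hϖ hsum
    have hzero := zero_mem (AddSubgroup.closure R)
    refine ⟨_, (hR.isPrimitiveWeight_weylGrp_add_smul_iff hw hzero).2
      ((isPrimitiveWeight_iff_forall_dvd hQ hX).2 hprim), ?_⟩
    rw [hR.RJ_eq_inter_dvdPairing hpos hϖ hle hX hJ]
    exact hR.image_weylGrp_inter_dvdPairing hw hzero dvd_rfl z

end

/-- **Proposition (classification of the `d`-kernels of an irreducible ADE root
system)**. With the classical affine setup (simple roots `α_i`, fundamental weights
`ϖ_i`, heights `h_i`, `α_0 = -α̃`, `h_0 = 1`, `I = {0,…,n}`), the `d`-kernels of `R` are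
exactly the `w(R_J)` with `w ∈ W(R)` and `J ⊆ I` such that there exist integers `x_j > 0`
(`j ∈ J`) with `Σ_{j∈J} x_j h_j = d` and `gcd(d, {x_j : j ∈ J}) = 1`. -/
theorem classification_d_kernels {n : ℕ} (R : Set V)
    (hADE : IsADE R) (hirr : IsIrreducibleRS R)
    (hrank : Module.finrank ℝ (Submodule.span ℝ R) = n)
    (α : Fin n → V) (hαR : ∀ i, α i ∈ R)
    (hli : LinearIndependent ℝ α)
    (hspan : R ⊆ (Submodule.span ℝ (Set.range α) : Set V))
    (hpos : ∀ β ∈ R, (∃ c : Fin n → ℕ, β = ∑ i, (c i : ℝ) • α i) ∨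
      (∃ c : Fin n → ℕ, β = -(∑ i, (c i : ℝ) • α i)))
    (ϖ : Fin n → V) (hϖ : ∀ i j, ⟪ϖ i, α j⟫ = if i = j then 1 else 0)
    (h : Fin n → ℕ) (hh : ∀ i, IsGreatest ((fun β => ⟪ϖ i, β⟫) '' R) ((h i : ℝ)))
    (hhighest : (∑ i, (h i : ℝ) • α i) ∈ R)
    (d : ℕ) (hd : 1 ≤ d) :
    ∀ R' : Set V, IsDKernelOfRS d R R' ↔
      ∃ w ∈ WeylGrp R, ∃ J : Finset (Fin (n + 1)),
        (∃ xc : Fin (n + 1) → ℕ, (∀ j ∈ J, 0 < xc j) ∧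
          (∑ j ∈ J, xc j * ext0 1 h j) = d ∧ Nat.gcd d (J.gcd xc) = 1) ∧
        R' = (fun v => w v) '' RJ R α h J := by
  exact classification_d_kernels_general hADE hαR hpos hϖ hh hhighest hd

end
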